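/- Fix x > 0 and δ ≥ 1. Let C_x = ln(1+x)/(ln(1+x) − x/(1+x)) and D_x = 2·ln(x/(1+x))/ln(1+x). If G is an n-vertex graph with minimum degree at least δ and n ≥ (C_x−1)δ² + ((1−D_x)C_x + 1 + D_x)δ − D_x, then either G = K_{δ,n−δ} or P(G,x) < P(K_{δ,n−δ},x). -/

import Mathlib

/-- A finset of vertices is independent: no edge inside. -/
def SimpleGraph.IsIndepFinset {V : Type*} (G : SimpleGraph V) (s : Finset V) : Prop :=
  ∀ v ∈ s, ∀ w ∈ s, ¬ G.Adj v w

/-- `indepCount G t` = number of independent sets of size `t` in `G`. -/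
noncomputable def indepCount {V : Type*} [Fintype V] (G : SimpleGraph V) (t : ℕ) : ℕ :=
  Nat.card {s : Finset V // s.card = t ∧ G.IsIndepFinset s}

/-- `indepTotal G` = total number of independent sets in `G` (including ∅). -/
noncomputable def indepTotal {V : Type*} [Fintype V] (G : SimpleGraph V) : ℕ :=
  Nat.card {s : Finset V // G.IsIndepFinset s}

open Classical in
/-- The independence polynomial `P(G,x) = Σ_t i_t(G) xᵗ`. -/
noncomputable def indPoly {V : Type*} [Fintype V] (G : SimpleGraph V) (x : ℝ) : ℝ :=
  ∑ s ∈ Finset.univ.filter (fun s : Finset V => G.IsIndepFinset s), x ^ s.card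

open Classical in
theorem aux_powsum {V : Type*} (A : Finset V) (y : ℝ) :
    ∑ t ∈ A.powerset, y ^ t.card = (1 + y) ^ A.card := by
  have := Finset.sum_pow_mul_eq_add_pow y 1 A
  simpa [add_comm] using this

open Classical in
theorem aux_split {V : Type*} [Fintype V] (G : SimpleGraph V) (x : ℝ) (hx : 0 < x)
    (I : Finset V) :
    indPoly G x ≤ ∑ S ∈ Iᶜ.powerset.filter (fun S => G.IsIndepFinset S),
      x ^ S.card * (1 + x) ^ (I.filter (fun w => ∀ v ∈ S, ¬ G.Adj v w)).card := by
  unfold indPoly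
  rw [← Finset.sum_fiberwise_of_maps_to (g := fun s => s \ I)
    (t := Iᶜ.powerset.filter (fun S => G.IsIndepFinset S))]
  · apply Finset.sum_le_sum
    intro S hS
    rw [← aux_powsum, Finset.mul_sum]
    set F := (Finset.univ.filter (fun s : Finset V => G.IsIndepFinset s)).filter
      (fun s => s \ I = S) with hF
    have hinj : Set.InjOn (fun s : Finset V => s ∩ I) F := by
      intro s hs t ht hst
      have h1 : s \ I = S := (Finset.mem_filter.1 hs).2
      have h2 : t \ I = S := (Finset.mem_filter.1 ht).2
      have hst' : s ∩ I = t ∩ I := hst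
      rw [← Finset.sdiff_union_inter s I, ← Finset.sdiff_union_inter t I, h1, h2, hst']
    have heq : ∑ s ∈ F, x ^ s.card = ∑ t ∈ F.image (fun s => s ∩ I), x ^ S.card * x ^ t.card := by
      rw [Finset.sum_image hinj]
      apply Finset.sum_congr rfl
      intro s hs
      have h1 : s \ I = S := (Finset.mem_filter.1 hs).2
      rw [← pow_add, ← h1, Finset.card_sdiff_add_card_inter]
    rw [heq]
    apply Finset.sum_le_sum_of_subset_of_nonneg
    · intro t ht
      obtain ⟨s, hs, rfl⟩ := Finset.mem_image.1 ht
      have h1 : s \ I = S := (Finset.mem_filter.1 hs).2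
      have h2 : G.IsIndepFinset s := (Finset.mem_filter.1 (Finset.mem_filter.1 hs).1).2
      rw [Finset.mem_powerset]
      intro w hw
      have hw' := Finset.mem_inter.1 hw
      refine Finset.mem_filter.2 ⟨hw'.2, fun v hv => ?_⟩
      rw [← h1] at hv
      exact h2 v (Finset.mem_sdiff.1 hv).1 w hw'.1
    · intros; positivity
  · intro s hs
    simp only [Finset.mem_filter, Finset.mem_univ, true_and, Finset.mem_powerset] at hs ⊢
    refine ⟨fun v hv => by simp_all, fun v hv w hw => hs v (Finset.mem_sdiff.1 hv).1 w (Finset.mem_sdiff.1 hw).1⟩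

open Classical in
theorem aux_exchange {V : Type*} [Fintype V] (G : SimpleGraph V) (I S : Finset V)
    (hI : G.IsIndepFinset I) (hmax : ∀ J : Finset V, G.IsIndepFinset J → J.card ≤ I.card)
    (hS : G.IsIndepFinset S) (hSI : S ⊆ Iᶜ) :
    (I.filter (fun w => ∀ v ∈ S, ¬ G.Adj v w)).card + S.card ≤ I.card := by
  rw [← Finset.card_union_of_disjoint]
  · apply hmax
    intro v hv w hw
    rw [Finset.mem_union, Finset.mem_filter] at hv hw
    rcases hv with hv | hv <;> rcases hw with hw | hw
    · exact hI v hv.1 w hw.1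
    · exact fun h => hv.2 w hw h.symm
    · exact hw.2 v hv
    · exact hS v hv w hw
  · rw [Finset.disjoint_left]
    intro v hv hv'
    exact (Finset.mem_compl.1 (hSI hv')) (Finset.mem_filter.1 hv).1

theorem aux_term (x : ℝ) (hx : 0 < x) (m s A : ℕ) (h : m + s ≤ A) :
    x ^ s * (1 + x) ^ m ≤ (1 + x) ^ A * (x / (1 + x)) ^ s := by
  have h1 : (1 + x) ^ A * (x / (1 + x)) ^ s = x ^ s * (1 + x) ^ (A - s) := by
    have : (1 + x) ^ A = (1 + x) ^ (A - s) * (1 + x) ^ s := by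
      rw [← pow_add]; congr 1; omega
    rw [this, div_pow]
    field_simp
  rw [h1]
  apply mul_le_mul_of_nonneg_left _ (by positivity)
  exact pow_le_pow_right₀ (by linarith) (by omega)

open Classical in
theorem aux_boundA {V : Type*} [Fintype V] (G : SimpleGraph V) (x : ℝ) (hx : 0 < x)
    (I : Finset V)
    (hI : G.IsIndepFinset I) (hmax : ∀ J : Finset V, G.IsIndepFinset J → J.card ≤ I.card) :
    indPoly G x ≤ (1 + x) ^ I.card * (1 + x / (1 + x)) ^ Iᶜ.card := by
  refine (aux_split G x hx I).trans ?_
  rw [← aux_powsum Iᶜ, Finset.mul_sum]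
  refine le_trans (Finset.sum_le_sum (g := fun S => (1 + x) ^ I.card * (x / (1 + x)) ^ S.card) ?_) ?_
  · intro S hS
    rw [Finset.mem_filter, Finset.mem_powerset] at hS
    exact aux_term x hx _ _ _ (aux_exchange G I S hI hmax hS.2 hS.1)
  · apply Finset.sum_le_sum_of_subset_of_nonneg (Finset.filter_subset _ _)
    intros; positivity

open Classical in
theorem aux_boundB {V : Type*} [Fintype V] (G : SimpleGraph V) (x : ℝ) (hx : 0 < x)
    (I H : Finset V) (d : ℕ)
    (hI : G.IsIndepFinset I) (hmax : ∀ J : Finset V, G.IsIndepFinset J → J.card ≤ I.card)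
    (hHI : H ⊆ Iᶜ) (hd : ∀ v ∈ H, d ≤ (I.filter (fun w => G.Adj v w)).card) :
    indPoly G x ≤ (1 + x) ^ I.card * (1 + x / (1 + x)) ^ (Iᶜ.card - H.card)
      + (1 + x) ^ (I.card - d) * (1 + x) ^ Iᶜ.card := by
  refine (aux_split G x hx I).trans ?_
  rw [← Finset.sum_filter_add_sum_filter_not _ (fun S => S ⊆ Iᶜ \ H)]
  apply add_le_add
  · rw [← Finset.card_sdiff_of_subset hHI, ← aux_powsum (Iᶜ \ H), Finset.mul_sum]
    refine le_trans (Finset.sum_le_sum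
      (g := fun S => (1 + x) ^ I.card * (x / (1 + x)) ^ S.card) ?_) ?_
    · intro S hS
      rw [Finset.mem_filter, Finset.mem_filter, Finset.mem_powerset] at hS
      exact aux_term x hx _ _ _ (aux_exchange G I S hI hmax hS.1.2 hS.1.1)
    · apply Finset.sum_le_sum_of_subset_of_nonneg
      · intro S hS
        exact Finset.mem_powerset.2 (Finset.mem_filter.1 hS).2
      · intros; positivity
  · rw [← aux_powsum Iᶜ, Finset.mul_sum]
    refine le_trans (Finset.sum_le_sum
      (g := fun S => (1 + x) ^ (I.card - d) * x ^ S.card) ?_) ?_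
    · intro S hS
      rw [Finset.mem_filter, Finset.mem_filter, Finset.mem_powerset] at hS
      obtain ⟨⟨h1, h2⟩, h3⟩ := hS
      have : ∃ v ∈ S, v ∈ H := by
        by_contra hcon
        push Not at hcon
        exact h3 fun v hv => Finset.mem_sdiff.2 ⟨h1 hv, hcon v hv⟩
      obtain ⟨v, hvS, hvH⟩ := this
      rw [mul_comm]
      apply mul_le_mul_of_nonneg_right _ (by positivity)
      apply pow_le_pow_right₀ (by linarith)
      have hle : (I.filter (fun w => ∀ v ∈ S, ¬ G.Adj v w)).card ≤
          (I.filter (fun w => ¬ G.Adj v w)).card := by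
        apply Finset.card_le_card
        intro w hw
        rw [Finset.mem_filter] at hw ⊢
        exact ⟨hw.1, hw.2 v hvS⟩
      have := Finset.card_filter_add_card_filter_not (s := I) (fun w => G.Adj v w)
      have := hd v hvH
      omega
    · apply Finset.sum_le_sum_of_subset_of_nonneg
      · intro S hS
        exact (Finset.mem_filter.1 (Finset.mem_filter.1 hS).1).1
      · intros; positivity

open Classical in
theorem aux_H {V : Type*} [Fintype V] (G : SimpleGraph V) (δ k : ℕ) (hδ : 1 ≤ δ)
    (I : Finset V) (hk : Iᶜ.card = k + δ)
    (hdeg : ∀ v ∈ I, δ ≤ (Iᶜ.filter (fun w => G.Adj v w)).card) :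
    δ ≤ (Iᶜ.filter (fun v => I.card ≤ (k + 1) * (I.filter (fun w => G.Adj v w)).card)).card := by
  by_contra hcon
  push Not at hcon
  set P : V → Prop := fun v => I.card ≤ (k + 1) * (I.filter (fun w => G.Adj v w)).card with hP
  have hcon' : (Iᶜ.filter P).card < δ := by convert hcon
  clear hcon
  have e1 : δ * I.card ≤ ∑ v ∈ Iᶜ, (I.filter (fun w => G.Adj v w)).card := by
    have : ∑ v ∈ Iᶜ, (I.filter (fun w => G.Adj v w)).card
        = ∑ w ∈ I, (Iᶜ.filter (fun v => G.Adj v w)).card :=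
      Finset.sum_card_bipartiteAbove_eq_sum_card_bipartiteBelow (fun v w => G.Adj v w)
    rw [this, mul_comm, ← smul_eq_mul]
    apply Finset.card_nsmul_le_sum
    intro w hw
    simpa [G.adj_comm] using hdeg w hw
  rw [← Finset.sum_filter_add_sum_filter_not _ P] at e1
  have e2 : ∑ v ∈ Iᶜ.filter P, (I.filter (fun w => G.Adj v w)).card ≤ (Iᶜ.filter P).card * I.card := by
    rw [← smul_eq_mul]
    apply Finset.sum_le_card_nsmul
    intro v _
    exact Finset.card_filter_le _ _
  have hc := Finset.card_filter_add_card_filter_not (s := Iᶜ) P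
  have e3 : (k + 1) * ∑ v ∈ Iᶜ.filter (fun v => ¬ P v), (I.filter (fun w => G.Adj v w)).card
      < (Iᶜ.filter (fun v => ¬ P v)).card * I.card := by
    rw [Finset.mul_sum, ← smul_eq_mul (b := I.card), ← Finset.sum_const]
    apply Finset.sum_lt_sum_of_nonempty
    · rw [← Finset.card_pos]; omega
    · intro v hv
      have := (Finset.mem_filter.1 hv).2
      simp only [hP, not_le] at this
      exact this
  generalize (Iᶜ.filter P).card = h at *
  generalize (Iᶜ.filter (fun v => ¬ P v)).card = r at *
  obtain ⟨j, rfl⟩ : ∃ j, δ = h + 1 + j := ⟨δ - h - 1, by omega⟩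
  have hr : r = k + 1 + j := by omega
  subst hr
  have e4 := Nat.mul_le_mul_left (k+1) (e1.trans (Nat.add_le_add_right e2 _))
  nlinarith [Nat.zero_le (k * j * I.card)]

open Classical in
theorem aux_K_lower (δ m : ℕ) (hδ : 1 ≤ δ) (x : ℝ) (hx : 0 < x) :
    (1 + x) ^ m < indPoly (completeBipartiteGraph (Fin δ) (Fin m)) x := by
  have h0 : ((Finset.univ : Finset (Fin m)).map
    (Function.Embedding.inr : Fin m ↪ Fin δ ⊕ Fin m)).card = m := by simp
  have h1 := aux_powsum ((Finset.univ : Finset (Fin m)).map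
    (Function.Embedding.inr : Fin m ↪ Fin δ ⊕ Fin m)) x
  rw [h0] at h1
  rw [← h1]
  unfold indPoly
  refine Finset.sum_lt_sum_of_subset (i := {Sum.inl ⟨0, hδ⟩}) ?_ ?_ ?_ ?_ ?_
  · intro S hS
    rw [Finset.mem_powerset] at hS
    rw [Finset.mem_filter]
    refine ⟨Finset.mem_univ _, fun v hv w hw => ?_⟩
    have hv' := hS hv
    have hw' := hS hw
    rw [Finset.mem_map] at hv' hw'
    obtain ⟨a, -, rfl⟩ := hv'
    obtain ⟨b, -, rfl⟩ := hw'
    simp [completeBipartiteGraph]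
  · rw [Finset.mem_filter]
    refine ⟨Finset.mem_univ _, fun v hv w hw => ?_⟩
    rw [Finset.mem_singleton] at hv hw
    subst hv; subst hw
    exact SimpleGraph.irrefl _
  · simp
  · positivity
  · intros; positivity

open Classical in
theorem aux_iso {V W : Type*} [Fintype V] [Fintype W] (G : SimpleGraph V) (K : SimpleGraph W)
    (e : V ≃ W) (h : ∀ v w, K.Adj (e v) (e w) → G.Adj v w) (x : ℝ) (hx : 0 < x) :
    Nonempty (G ≃g K) ∨ indPoly G x < indPoly K x := by
  by_cases hh : ∀ v w, G.Adj v w → K.Adj (e v) (e w)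
  · exact Or.inl ⟨⟨e, fun {v w} => ⟨h v w, hh v w⟩⟩⟩
  · right
    push Not at hh
    obtain ⟨a, b, hab, hnab⟩ := hh
    unfold indPoly
    have : ∑ s ∈ Finset.univ.filter (fun s : Finset V => G.IsIndepFinset s), x ^ s.card
      = ∑ s ∈ (Finset.univ.filter (fun s : Finset V => G.IsIndepFinset s)).image
        (fun s => s.map e.toEmbedding), x ^ s.card := by
      rw [Finset.sum_image]
      · simp
      · intro s _ t _ hst
        exact Finset.map_injective _ hst
    rw [this]
    refine Finset.sum_lt_sum_of_subset (i := {e a, e b}) ?_ ?_ ?_ ?_ ?_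
    · intro S hS
      obtain ⟨s, hs, rfl⟩ := Finset.mem_image.1 hS
      rw [Finset.mem_filter] at hs ⊢
      refine ⟨Finset.mem_univ _, fun v hv w hw hK => ?_⟩
      rw [Finset.mem_map] at hv hw
      obtain ⟨v, hv, rfl⟩ := hv
      obtain ⟨w, hw, rfl⟩ := hw
      exact hs.2 v hv w hw (h v w hK)
    · rw [Finset.mem_filter]
      refine ⟨Finset.mem_univ _, fun v hv w hw => ?_⟩
      rw [Finset.mem_insert, Finset.mem_singleton] at hv hw
      rcases hv with rfl | rfl <;> rcases hw with rfl | rfl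
      · exact SimpleGraph.irrefl _
      · exact hnab
      · exact fun h => hnab h.symm
      · exact SimpleGraph.irrefl _
    · intro hmem
      obtain ⟨s, hs, hse⟩ := Finset.mem_image.1 hmem
      have ha : a ∈ s := by
        have : e a ∈ s.map e.toEmbedding := by rw [hse]; simp
        simpa using this
      have hb : b ∈ s := by
        have : e b ∈ s.map e.toEmbedding := by rw [hse]; simp
        simpa using this
      exact (Finset.mem_filter.1 hs).2 a ha b hb hab
    · positivity
    · intros; positivity

open Classical in
theorem aux_core {V : Type*} [Fintype V] (G : SimpleGraph V)
    (n δ : ℕ) (x Cx Dx : ℝ) (hx : 0 < x) (hδ : 1 ≤ δ)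
    (hCx : Cx = Real.log (1 + x) / (Real.log (1 + x) - x / (1 + x)))
    (hDx : Dx = 2 * Real.log (x / (1 + x)) / Real.log (1 + x))
    (hcard : Fintype.card V = n)
    (hn : (Cx - 1) * (δ : ℝ) ^ 2 + ((1 - Dx) * Cx + 1 + Dx) * δ - Dx ≤ (n : ℝ))
    (hdeg : ∀ v : V, δ ≤ G.degree v) :
    Nonempty (G ≃g completeBipartiteGraph (Fin δ) (Fin (n - δ))) ∨
      indPoly G x < indPoly (completeBipartiteGraph (Fin δ) (Fin (n - δ))) x := by
  have hL : 0 < Real.log (1 + x) := Real.log_pos (by linarith)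
  have hLa : 0 < Real.log (1 + x) - x / (1 + x) := by
    have h1 : Real.log (1 / (1 + x)) < 1 / (1 + x) - 1 := by
      apply Real.log_lt_sub_one_of_pos (by positivity)
      rw [Ne, div_eq_one_iff_eq (by positivity)]
      linarith
    rw [one_div, Real.log_inv] at h1
    have h2 : x / (1 + x) = 1 - (1 + x)⁻¹ := by field_simp; ring
    linarith
  have ha0 : 0 < x / (1 + x) := by positivity
  have ha1 : x / (1 + x) < 1 := by rw [div_lt_one (by positivity)]; linarith
  have hloga : Real.log (x / (1 + x)) < 0 := Real.log_neg ha0 ha1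
  have hDL : Dx * Real.log (1 + x) = 2 * Real.log (x / (1 + x)) := by
    rw [hDx]; field_simp
  have hCL : Cx * (Real.log (1 + x) - x / (1 + x)) = Real.log (1 + x) := by
    rw [hCx, div_mul_cancel₀ _ hLa.ne']
  have hD : Dx < 0 := by nlinarith
  have hC : 1 < Cx := by
    rw [hCx, one_lt_div hLa]; linarith
  have hδR : (1 : ℝ) ≤ δ := by exact_mod_cast hδ
  have hnpos : 0 < n := by
    have : (0 : ℝ) < n := by
      refine lt_of_lt_of_le ?_ hn
      nlinarith [mul_pos (sub_pos.2 hC) (show (0:ℝ) < δ by linarith), mul_pos (mul_pos (sub_pos.2 hC) (show (0:ℝ) < δ by linarith)) (neg_pos.2 hD), mul_pos (sub_pos.2 hC) (show (0:ℝ) < δ ^ 2 by positivity)]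
    exact_mod_cast this
  -- maximum independent set
  obtain ⟨I, hImem, hImax⟩ := Finset.exists_max_image
    (Finset.univ.filter (fun s : Finset V => G.IsIndepFinset s)) Finset.card
    ⟨∅, Finset.mem_filter.2 ⟨Finset.mem_univ _, fun v hv => absurd hv (Finset.notMem_empty v)⟩⟩
  have hI : G.IsIndepFinset I := (Finset.mem_filter.1 hImem).2
  have hmax : ∀ J : Finset V, G.IsIndepFinset J → J.card ≤ I.card := fun J hJ =>
    hImax J (Finset.mem_filter.2 ⟨Finset.mem_univ _, hJ⟩)
  have hdegI : ∀ v ∈ I, δ ≤ (Iᶜ.filter (fun w => G.Adj v w)).card := by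
    intro v hv
    refine (hdeg v).trans ?_
    rw [← SimpleGraph.card_neighborFinset_eq_degree]
    apply Finset.card_le_card
    intro w hw
    rw [SimpleGraph.mem_neighborFinset] at hw
    exact Finset.mem_filter.2 ⟨Finset.mem_compl.2 fun hwI => hI v hv w hwI hw, hw⟩
  have hIpos : 0 < I.card := by
    have : 0 < Fintype.card V := by omega
    obtain ⟨v⟩ := Fintype.card_pos_iff.1 this
    have := hmax {v} (by
      intro a ha b hb
      rw [Finset.mem_singleton] at ha hb
      subst ha; subst hb; exact SimpleGraph.irrefl _)
    simpa using this
  have hIc : I.card + Iᶜ.card = n := by rw [← hcard]; exact Finset.card_add_card_compl I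
  have hbδ : δ ≤ Iᶜ.card := by
    obtain ⟨v, hv⟩ := Finset.card_pos.1 hIpos
    exact (hdegI v hv).trans (Finset.card_filter_le _ _)
  obtain ⟨k, hk⟩ : ∃ k, Iᶜ.card = k + δ := ⟨Iᶜ.card - δ, by omega⟩
  have hnδ : n - δ = I.card + k := by omega
  have hKlow := aux_K_lower δ (n - δ) hδ x hx
  have h1x : (0:ℝ) < 1 + x := by linarith
  rcases Nat.eq_zero_or_pos k with hk0 | hkpos
  · -- extremal
    have hfull : ∀ v ∈ I, ∀ w, w ∉ I → G.Adj v w := by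
      intro v hv w hw
      have h1 : Iᶜ.filter (fun w => G.Adj v w) = Iᶜ := by
        apply Finset.eq_of_subset_of_card_le (Finset.filter_subset _ _)
        have := hdegI v hv
        omega
      have h2 : w ∈ Iᶜ.filter (fun w => G.Adj v w) := by rw [h1]; simpa using hw
      exact (Finset.mem_filter.1 h2).2
    have hc1 : Fintype.card {v // v ∉ I} = δ := by
      rw [Fintype.card_subtype]
      have : Finset.univ.filter (fun v => v ∉ I) = Iᶜ := by ext; simp
      rw [this]; omega
    have hc2 : Fintype.card {v // ¬ v ∉ I} = n - δ := by
      rw [Fintype.card_subtype]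
      have : Finset.univ.filter (fun v => ¬ v ∉ I) = I := by ext; simp
      rw [this]; omega
    let e1 : {v // v ∉ I} ≃ Fin δ := Fintype.equivFinOfCardEq hc1
    let e2 : {v // ¬ v ∉ I} ≃ Fin (n - δ) := Fintype.equivFinOfCardEq hc2
    let e0 : V ≃ Fin δ ⊕ Fin (n - δ) :=
      (Equiv.sumCompl (fun v => v ∉ I)).symm.trans (Equiv.sumCongr e1 e2)
    apply aux_iso G _ e0 _ x hx
    intro v w hvw
    have key1 : ∀ v, v ∉ I → (e0 v).isLeft = true := by
      intro v hv
      simp [e0, Equiv.sumCompl_symm_apply_of_pos (p := fun v => v ∉ I) hv]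
    have key2 : ∀ v, v ∈ I → (e0 v).isRight = true := by
      intro v hv
      simp [e0, Equiv.sumCompl_symm_apply_of_neg (p := fun v => v ∉ I) (not_not.2 hv)]
    by_cases hv : v ∈ I <;> by_cases hw : w ∈ I
    · have h1 := key2 v hv
      have h2 := key2 w hw
      revert hvw h1 h2
      rcases e0 v <;> rcases e0 w <;> simp [completeBipartiteGraph]
    · exact hfull v hv w hw
    · exact (hfull w hw v hv).symm
    · have h1 := key1 v hv
      have h2 := key1 w hw
      revert hvw h1 h2
      rcases e0 v <;> rcases e0 w <;> simp [completeBipartiteGraph]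
  · right
    refine lt_of_le_of_lt ?_ hKlow
    rw [hnδ]
    by_cases hcase : Cx * δ ≤ (Iᶜ.card : ℝ)
    · refine (aux_boundA G x hx I hI hmax).trans ?_
      rw [pow_add]
      apply mul_le_mul_of_nonneg_left _ (by positivity)
      rw [← Real.log_le_log_iff (by positivity) (by positivity), Real.log_pow, Real.log_pow]
      have hl : Real.log (1 + x / (1 + x)) ≤ x / (1 + x) := by
        have := Real.log_le_sub_one_of_pos (show 0 < 1 + x / (1 + x) by positivity)
        linarith
      have hb : (Iᶜ.card : ℝ) = k + δ := by exact_mod_cast hk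
      have e1 := mul_le_mul_of_nonneg_left hl (Nat.cast_nonneg (α := ℝ) Iᶜ.card)
      have e2 := mul_le_mul_of_nonneg_right hcase hLa.le
      have e3 : Cx * δ * (Real.log (1 + x) - x / (1 + x)) = δ * Real.log (1 + x) := by
        linear_combination (δ : ℝ) * hCL
      rw [hb] at *
      nlinarith
    · push Not at hcase
      have hH := aux_H G δ k hδ I hk hdegI
      obtain ⟨H, hHsub, hHcard⟩ := Finset.exists_subset_card_eq hH
      have hHI : H ⊆ Iᶜ := hHsub.trans (Finset.filter_subset _ _)
      obtain ⟨d, hd1, hd2⟩ : ∃ d : ℕ, I.card ≤ (k + 1) * d ∧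
          ∀ v ∈ H, d ≤ (I.filter (fun w => G.Adj v w)).card := by
        obtain ⟨v, hv, hmin⟩ := Finset.exists_min_image H
          (fun v => (I.filter (fun w => G.Adj v w)).card) (Finset.card_pos.1 (by omega))
        exact ⟨_, (Finset.mem_filter.1 (hHsub hv)).2, hmin⟩
      have hdI : d ≤ I.card := by
        obtain ⟨v, hv⟩ := Finset.card_pos.1 (show 0 < H.card by omega)
        exact (hd2 v hv).trans (Finset.card_filter_le _ _)
      refine (aux_boundB G x hx I H d hI hmax hHI hd2).trans ?_
      have hbk : Iᶜ.card - H.card = k := by omega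
      rw [hbk, hk]
      have hb : (Iᶜ.card : ℝ) = k + δ := by exact_mod_cast hk
      have hnR : (I.card : ℝ) + (k + δ) = n := by rw [← hb]; exact_mod_cast hIc
      have hd1R : (I.card : ℝ) ≤ (k + 1) * d := by exact_mod_cast hd1
      have hkC : (k : ℝ) ≤ (Cx - 1) * δ := by linarith
      have hk0 : (0:ℝ) ≤ k := Nat.cast_nonneg k
      have hdD : (δ : ℝ) - Dx ≤ d := by
        have : ((k : ℝ) + 1) * (δ - Dx) ≤ (k + 1) * d := by
          refine le_trans ?_ hd1R
          have := mul_le_mul_of_nonneg_right hkC (show 0 ≤ (δ : ℝ) - Dx + 1 by linarith)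
          nlinarith
        exact le_of_mul_le_mul_left this (by linarith)
      have hpow : (1 + x) ^ δ ≤ (x / (1 + x)) ^ 2 * (1 + x) ^ d := by
        rw [← Real.log_le_log_iff (by positivity) (by positivity),
          Real.log_mul (by positivity) (by positivity), Real.log_pow, Real.log_pow, Real.log_pow]
        push_cast
        nlinarith
      have hsq : 1 + x / (1 + x) = (1 + x) * (1 - (x / (1 + x)) ^ 2) := by
        field_simp; ring
      have hasq : (x / (1 + x)) ^ 2 ≤ 1 := pow_le_one₀ ha0.le ha1.le
      have hasq0 : 0 ≤ (x / (1 + x)) ^ 2 := sq_nonneg _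
      have hk1 : (1 - (x / (1 + x)) ^ 2) ^ k ≤ 1 - (x / (1 + x)) ^ 2 :=
        pow_le_of_le_one (by linarith only [hasq]) (by linarith only [hasq0]) (by omega)
      have hId : (1 + x) ^ I.card = (1 + x) ^ (I.card - d) * (1 + x) ^ d := by
        rw [← pow_add]; congr 1; omega
      have hfin : (1 + x) ^ (I.card - d) * (1 + x) ^ (k + δ)
          ≤ (1 + x) ^ I.card * (1 + x) ^ k * (x / (1 + x)) ^ 2 := by
        rw [hId, pow_add]
        have := mul_le_mul_of_nonneg_left hpow
          (show 0 ≤ (1 + x) ^ (I.card - d) * (1 + x) ^ k by positivity)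
        calc _ = (1 + x) ^ (I.card - d) * (1 + x) ^ k * (1 + x) ^ δ := by ring
          _ ≤ _ := this
          _ = _ := by ring
      have hfst : (1 + x) ^ I.card * (1 + x / (1 + x)) ^ k
          ≤ (1 + x) ^ I.card * (1 + x) ^ k * (1 - (x / (1 + x)) ^ 2) := by
        rw [hsq, mul_pow, ← mul_assoc]
        exact mul_le_mul_of_nonneg_left hk1 (by positivity)
      refine (add_le_add hfst hfin).trans (le_of_eq ?_)
      rw [pow_add (1 + x) I.card k]
      ring

theorem main_weighted_bound {V : Type*} [Fintype V] (G : SimpleGraph V) [DecidableRel G.Adj]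
    (n δ : ℕ) (x Cx Dx : ℝ) (hx : 0 < x) (hδ : 1 ≤ δ)
    (hCx : Cx = Real.log (1 + x) / (Real.log (1 + x) - x / (1 + x)))
    (hDx : Dx = 2 * Real.log (x / (1 + x)) / Real.log (1 + x))
    (hcard : Fintype.card V = n)
    (hn : (Cx - 1) * (δ : ℝ) ^ 2 + ((1 - Dx) * Cx + 1 + Dx) * δ - Dx ≤ (n : ℝ))
    (hdeg : ∀ v : V, δ ≤ G.degree v) :
    Nonempty (G ≃g completeBipartiteGraph (Fin δ) (Fin (n - δ))) ∨
      indPoly G x < indPoly (completeBipartiteGraph (Fin δ) (Fin (n - δ))) x := by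
  exact aux_core G n δ x Cx Dx hx hδ hCx hDx hcard hn (fun v => by convert hdeg v)
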